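/- Let ν > 0, κ > 0, γ > 1, T > 0. Let ρ : [0,T] × ℝ³ → ℝ and u : [0,T] × ℝ³ → ℝ³ be smooth (C^∞) functions, ℤ³-periodic in the space variable, with ρ > 0 everywhere, satisfying pointwise the Navier–Stokes–Korteweg system ∂_t ρ + div(ρ u) = 0 and ∂_t(ρ u) + div(ρ u ⊗ u) + ∇(ρ^γ) − 2ν div(ρ Du) − 2κ² ρ ∇(Δρ) = 0. Define the energy E(t) = ∫_{[0,1]³} [ (1/2) ρ |u|² + ρ^γ/(γ−1) + κ² |∇ρ|² ] dx. Then E is differentiable on (0,T) and for every t ∈ (0,T): E'(t) = − 2ν ∫_{[0,1]³} ρ |Du|² dx, where |Du|² is the squared Frobenius norm of the symmetric gradient of u. -/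

import Mathlib

open scoped BigOperators
open MeasureTheory

noncomputable section

/-- Points of `ℝ³`, realized as `Fin 3 → ℝ`. -/
abbrev V3 : Type := Fin 3 → ℝ

/-- Partial derivative `∂ᵢ f` of a scalar field. -/
def pd (i : Fin 3) (f : V3 → ℝ) (x : V3) : ℝ := fderiv ℝ f x (Pi.single i 1)

/-- Gradient `∇f` of a scalar field. -/
def grad (f : V3 → ℝ) (x : V3) : V3 := fun i => pd i f x

/-- Divergence `div u` of a vector field. -/
def vdiv (u : V3 → V3) (x : V3) : ℝ := ∑ i, pd i (fun y => u y i) x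

/-- Laplacian `Δf` of a scalar field. -/
def lap (f : V3 → ℝ) (x : V3) : ℝ := ∑ i, pd i (fun y => pd i f y) x

/-- Divergence (row-wise) of a matrix field: `(div M)_i = ∑_j ∂_j M_{ij}`. -/
def mdiv (M : V3 → Fin 3 → Fin 3 → ℝ) (x : V3) : V3 :=
  fun i => ∑ j, pd j (fun y => M y i j) x

/-- Jacobian matrix `(∇u)_{ij} = ∂_j u_i` of a vector field. -/
def jacb (u : V3 → V3) (x : V3) : Fin 3 → Fin 3 → ℝ := fun i j => pd j (fun y => u y i) x

/-- Symmetric part `Du = (∇u + ∇ᵀu)/2` of the Jacobian. -/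
def symJ (u : V3 → V3) (x : V3) : Fin 3 → Fin 3 → ℝ :=
  fun i j => (jacb u x i j + jacb u x j i) / 2

/-- Antisymmetric part `Au = (∇u − ∇ᵀu)/2` of the Jacobian. -/
def asymJ (u : V3 → V3) (x : V3) : Fin 3 → Fin 3 → ℝ :=
  fun i j => (jacb u x i j - jacb u x j i) / 2

/-- Euclidean dot product on `ℝ³`. -/
def dot (a b : V3) : ℝ := ∑ i, a i * b i

/-- Squared Euclidean norm on `ℝ³`. -/
def normSq (a : V3) : ℝ := ∑ i, (a i) ^ 2

/-!
The identity `p(ρ) = ρ H'(ρ) - H(ρ)` gives `∇p(ρ) = ρ ∇H'(ρ)`, so the pressure and the Korteweg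
force combine into `ρ ∇(H'(ρ) - 2κ²Δρ)`. Dotting the momentum equation with `u` and using mass
conservation, both for the transport of `|u|²/2` and to rewrite
`(H'(ρ) - 2κ²Δρ) div(ρu) = -(H'(ρ) - 2κ²Δρ) ∂ₜρ`, one finds that the energy density changes at rate
`-2νρ|Du|²` plus the divergence of a flux. The flux is periodic, so its divergence has zero integral
over the unit cell, and differentiating the energy under the integral sign gives the claim.
-/

section Periodic

/-- `ℤ^ι`-periodicity: invariance under all translations by integer vectors. -/
def LatticePeriodic {ι α : Type*} (f : (ι → ℝ) → α) : Prop :=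
  ∀ (x : ι → ℝ) (k : ι → ℤ), f (x + fun i => (k i : ℝ)) = f x

namespace LatticePeriodic

protected lemma fderiv {ι E : Type*} [Finite ι] [NormedAddCommGroup E] [NormedSpace ℝ E]
    {f : (ι → ℝ) → E} (hf : LatticePeriodic f) : LatticePeriodic (fderiv ℝ f) := by
  cases nonempty_fintype ι
  intro x k
  rw [← fderiv_comp_add_right]
  exact congrArg (fderiv ℝ · x) (funext fun y => hf y k)

protected lemma apply {ι κ : Type*} {α : κ → Type*} {f : (ι → ℝ) → ∀ j, α j}
    (hf : LatticePeriodic f) (j : κ) : LatticePeriodic fun x => f x j :=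
  fun x k => congrFun (hf x k) j

protected lemma pd {f : V3 → ℝ} (hf : LatticePeriodic f) (i : Fin 3) : LatticePeriodic (pd i f) :=
  fun x k => congrArg (· (Pi.single i 1)) (hf.fderiv x k)

protected lemma grad {f : V3 → ℝ} (hf : LatticePeriodic f) : LatticePeriodic (grad f) :=
  fun x k => funext fun i => hf.pd i x k

protected lemma lap {f : V3 → ℝ} (hf : LatticePeriodic f) : LatticePeriodic (lap f) :=
  fun x k => Finset.sum_congr rfl fun i _ => (hf.pd i).pd i x k

protected lemma symJ {w : V3 → V3} (hw : LatticePeriodic w) : LatticePeriodic (symJ w) := by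
  intro x k
  ext i j
  exact congrArg₂ (fun a b => (a + b) / 2) ((hw.apply i).pd j x k) ((hw.apply j).pd i x k)

end LatticePeriodic

theorem LatticePeriodic.integral_divergence_eq_zero {n : ℕ} {E : Type*} [NormedAddCommGroup E]
    [NormedSpace ℝ E] {f : Fin (n + 1) → (Fin (n + 1) → ℝ) → E} (hf : ∀ i, ContDiff ℝ 1 (f i))
    (hper : ∀ i, LatticePeriodic (f i)) :
    ∫ x in Set.Icc 0 1, ∑ i, fderiv ℝ (f i) x (Pi.single i 1) = 0 := by
  have hcont : Continuous fun x => ∑ i, fderiv ℝ (f i) x (Pi.single i 1) :=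
    continuous_finsetSum _ fun i _ => ((hf i).continuous_fderiv one_ne_zero).clm_apply
      continuous_const
  rw [integral_divergence_of_hasFDerivAt_off_countable' 0 1 zero_le_one f _ ∅ Set.countable_empty
    (fun i => (hf i).continuous.continuousOn)
    (fun x _ i => ((hf i).differentiable one_ne_zero x).hasFDerivAt) hcont.integrableOn_Icc]
  refine Finset.sum_eq_zero fun i _ => sub_eq_zero.2 (congrArg (integral _) (funext fun y => ?_))
  have hface : (i.insertNth 1 y : Fin (n + 1) → ℝ)
      = i.insertNth 0 y + fun j => ((Pi.single i 1 : Fin (n + 1) → ℤ) j : ℝ) := by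
    ext j
    cases j using Fin.succAboveCases i <;> simp
  exact (congrArg (f i) hface).trans (hper i _ _)

lemma integral_vdiv_eq_zero {F : V3 → V3} (hF : ContDiff ℝ 1 F) (hper : LatticePeriodic F) :
    ∫ x in Set.Icc 0 1, vdiv F x = 0 :=
  LatticePeriodic.integral_divergence_eq_zero (contDiff_pi.1 hF) hper.apply

end Periodic

section VectorCalculus

lemma dot_eq_dotProduct (a b : V3) : dot a b = a ⬝ᵥ b := rfl

variable {f g : V3 → ℝ} {v w : V3 → V3} {x : V3}

lemma pd_add (i : Fin 3) (hf : DifferentiableAt ℝ f x) (hg : DifferentiableAt ℝ g x) :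
    pd i (fun y => f y + g y) x = pd i f x + pd i g x := by
  simp [pd, fderiv_fun_add hf hg]

lemma pd_sub (i : Fin 3) (hf : DifferentiableAt ℝ f x) (hg : DifferentiableAt ℝ g x) :
    pd i (fun y => f y - g y) x = pd i f x - pd i g x := by
  simp [pd, fderiv_fun_sub hf hg]

lemma pd_mul (i : Fin 3) (hf : DifferentiableAt ℝ f x) (hg : DifferentiableAt ℝ g x) :
    pd i (fun y => f y * g y) x = f x * pd i g x + g x * pd i f x := by
  simp [pd, fderiv_fun_mul hf hg]

lemma pd_const_mul (i : Fin 3) (c : ℝ) (hf : DifferentiableAt ℝ f x) :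
    pd i (fun y => c * f y) x = c * pd i f x := by
  simp [pd, fderiv_const_mul hf c]

lemma pd_sum {ι : Type*} [Fintype ι] {f : ι → V3 → ℝ} (i : Fin 3)
    (hf : ∀ k, DifferentiableAt ℝ (f k) x) :
    pd i (fun y => ∑ k, f k y) x = ∑ k, pd i (f k) x := by
  simp [pd, fderiv_fun_sum fun k _ => hf k]

lemma pd_comp {h : ℝ → ℝ} (i : Fin 3) (hh : DifferentiableAt ℝ h (f x))
    (hf : DifferentiableAt ℝ f x) : pd i (fun y => h (f y)) x = deriv h (f x) * pd i f x := by
  have hcomp := (hh.hasDerivAt.comp_hasFDerivAt x hf.hasFDerivAt).fderiv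
  exact congrArg (· (Pi.single i 1)) hcomp

lemma vdiv_add (hv : DifferentiableAt ℝ v x) (hw : DifferentiableAt ℝ w x) :
    vdiv (fun y => v y + w y) x = vdiv v x + vdiv w x := by
  rw [vdiv, vdiv, vdiv, ← Finset.sum_add_distrib]
  exact Finset.sum_congr rfl fun i _ =>
    pd_add i (differentiableAt_pi.1 hv i) (differentiableAt_pi.1 hw i)

lemma vdiv_sub (hv : DifferentiableAt ℝ v x) (hw : DifferentiableAt ℝ w x) :
    vdiv (fun y => v y - w y) x = vdiv v x - vdiv w x := by
  rw [vdiv, vdiv, vdiv, ← Finset.sum_sub_distrib]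
  exact Finset.sum_congr rfl fun i _ =>
    pd_sub i (differentiableAt_pi.1 hv i) (differentiableAt_pi.1 hw i)

lemma vdiv_const_smul (c : ℝ) (hv : DifferentiableAt ℝ v x) :
    vdiv (fun y => c • v y) x = c * vdiv v x := by
  rw [vdiv, vdiv, Finset.mul_sum]
  exact Finset.sum_congr rfl fun i _ => pd_const_mul i c (differentiableAt_pi.1 hv i)

lemma vdiv_smul (hf : DifferentiableAt ℝ f x) (hv : DifferentiableAt ℝ v x) :
    vdiv (fun y => f y • v y) x = f x * vdiv v x + dot (v x) (grad f x) := by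
  rw [vdiv, vdiv, dot, Finset.mul_sum, ← Finset.sum_add_distrib]
  exact Finset.sum_congr rfl fun i _ => pd_mul i hf (differentiableAt_pi.1 hv i)

lemma vdiv_smul_grad (hf : DifferentiableAt ℝ f x) (hg : DifferentiableAt ℝ (grad g) x) :
    vdiv (fun y => f y • grad g y) x = f x * lap g x + dot (grad g x) (grad f x) :=
  vdiv_smul hf hg

lemma pd_half_normSq (j : Fin 3) (hw : DifferentiableAt ℝ w x) :
    pd j (fun y => 1 / 2 * normSq (w y)) x = ∑ i, w x i * jacb w x i j := by
  have hw' := differentiableAt_pi.1 hw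
  unfold normSq
  rw [pd_const_mul j _ (by fun_prop), pd_sum j (by fun_prop), Finset.mul_sum]
  refine Finset.sum_congr rfl fun i _ => ?_
  simp only [pow_two, pd_mul j (hw' i) (hw' i), jacb]
  ring

-- With `v` the momentum `ρ w`, this turns the convective term into transport of kinetic energy.
lemma dot_mdiv_outer (hw : DifferentiableAt ℝ w x) (hv : DifferentiableAt ℝ v x) :
    dot (w x) (mdiv (fun y i j => w y i * v y j) x)
      = normSq (w x) * vdiv v x + dot (v x) (grad (fun y => 1 / 2 * normSq (w y)) x) := by
  have hmdiv (i : Fin 3) : mdiv (fun y i j => w y i * v y j) x i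
      = w x i * vdiv v x + ∑ j, v x j * jacb w x i j :=
    vdiv_smul (differentiableAt_pi.1 hw i) hv
  have hswap : ∑ i, w x i * ∑ j, v x j * jacb w x i j
      = ∑ j, v x j * ∑ i, w x i * jacb w x i j := by
    simp only [Finset.mul_sum]
    rw [Finset.sum_comm]
    simp only [mul_left_comm]
  simp only [dot, hmdiv, grad, pd_half_normSq _ hw, mul_add, Finset.sum_add_distrib, hswap]
  simp only [normSq, Finset.sum_mul, pow_two, mul_assoc]

lemma vdiv_vecMul {M : V3 → Fin 3 → Fin 3 → ℝ} (hw : DifferentiableAt ℝ w x)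
    (hM : DifferentiableAt ℝ M x) :
    vdiv (fun y j => ∑ i, w y i * M y i j) x
      = dot (w x) (mdiv M x) + ∑ i, ∑ j, M x i j * jacb w x i j := by
  have hw' := differentiableAt_pi.1 hw
  have hM' (i j : Fin 3) : DifferentiableAt ℝ (fun y => M y i j) x :=
    differentiableAt_pi.1 (differentiableAt_pi.1 hM i) j
  calc vdiv (fun y j => ∑ i, w y i * M y i j) x
    _ = ∑ j, ∑ i, (w x i * pd j (fun y => M y i j) x + M x i j * jacb w x i j) :=
      Finset.sum_congr rfl fun j _ => (pd_sum j fun i => (hw' i).mul (hM' i j)).trans <|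
        Finset.sum_congr rfl fun i _ => pd_mul j (hw' i) (hM' i j)
    _ = dot (w x) (mdiv M x) + ∑ i, ∑ j, M x i j * jacb w x i j := by
      rw [Finset.sum_comm]
      simp only [Finset.sum_add_distrib, dot, mdiv, Finset.mul_sum]

lemma sum_symJ_mul_jacb (w : V3 → V3) (x : V3) :
    ∑ i, ∑ j, symJ w x i j * jacb w x i j = ∑ i, ∑ j, symJ w x i j ^ 2 := by
  simp only [symJ, Fin.sum_univ_three]
  ring

end VectorCalculus

section Regularity

variable {f : V3 → ℝ} {w : V3 → V3} {m n : WithTop ℕ∞}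

lemma contDiff_pd (i : Fin 3) (hf : ContDiff ℝ n f) (hmn : m + 1 ≤ n) : ContDiff ℝ m (pd i f) :=
  (hf.fderiv_right hmn).clm_apply contDiff_const

lemma contDiff_grad (hf : ContDiff ℝ n f) (hmn : m + 1 ≤ n) : ContDiff ℝ m (grad f) :=
  contDiff_pi.2 fun i => contDiff_pd i hf hmn

lemma contDiff_lap (hf : ContDiff ℝ n f) (hmn : m + 2 ≤ n) : ContDiff ℝ m (lap f) :=
  ContDiff.sum fun i _ =>
    contDiff_pd i (contDiff_pd i hf (by rwa [add_assoc, one_add_one_eq_two])) le_rfl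

lemma contDiff_symJ (hw : ContDiff ℝ n w) (hmn : m + 1 ≤ n) : ContDiff ℝ m (symJ w) :=
  contDiff_pi.2 fun i => contDiff_pi.2 fun j =>
    ((contDiff_pd j (contDiff_pi.1 hw i) hmn).add
      (contDiff_pd i (contDiff_pi.1 hw j) hmn)).div_const 2

lemma continuous_vdiv (hw : ContDiff ℝ 1 w) : Continuous (vdiv w) :=
  continuous_finsetSum _ fun i _ =>
    (contDiff_pd (m := 0) i (contDiff_pi.1 hw i) (zero_add 1).le).continuous

lemma contDiff_normSq {E : Type*} [NormedAddCommGroup E] [NormedSpace ℝ E] {g : E → V3}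
    (hg : ContDiff ℝ n g) : ContDiff ℝ n fun p => normSq (g p) :=
  ContDiff.sum fun i _ => (contDiff_pi.1 hg i).pow 2

lemma hasDerivAt_normSq {g : ℝ → V3} {g' : V3} {t : ℝ} (hg : HasDerivAt g g' t) :
    HasDerivAt (fun s => normSq (g s)) (2 * dot (g t) g') t := by
  refine (HasDerivAt.fun_sum fun i _ => (hasDerivAt_pi.1 hg i).pow 2).congr_deriv ?_
  simp [dot, Finset.mul_sum, mul_assoc]

end Regularity

section TimeDependent

/-- The time derivative `∂ₜ f` of a time-dependent field, as a field at time `t`. -/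
def timeDeriv {X F : Type*} [NormedAddCommGroup F] [NormedSpace ℝ F] (f : ℝ → X → F) (t : ℝ)
    (x : X) : F :=
  deriv (fun s => f s x) t

protected lemma LatticePeriodic.timeDeriv {ι F : Type*} [NormedAddCommGroup F] [NormedSpace ℝ F]
    {f : ℝ → (ι → ℝ) → F} (hf : ∀ t, LatticePeriodic (f t)) (t : ℝ) :
    LatticePeriodic (timeDeriv f t) :=
  fun x k => congrArg (deriv · t) (funext fun s => hf s x k)

variable {E F : Type*} [NormedAddCommGroup E] [NormedSpace ℝ E] [NormedAddCommGroup F]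
  [NormedSpace ℝ F] {f : ℝ → E → F} {m n : WithTop ℕ∞}

lemma contDiff_slice (hf : ContDiff ℝ n fun p : ℝ × E => f p.1 p.2) (t : ℝ) : ContDiff ℝ n (f t) :=
  hf.comp (contDiff_prodMk_right t)

lemma fderiv_slice_apply (hf : Differentiable ℝ fun p : ℝ × E => f p.1 p.2) (t : ℝ) (x v : E) :
    fderiv ℝ (f t) x v = fderiv ℝ (fun p : ℝ × E => f p.1 p.2) (t, x) (0, v) := by
  have h := (hf (t, x)).hasFDerivAt.comp x (hasFDerivAt_prodMk_right t x)
  exact congrArg (· v) h.fderiv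

lemma hasDerivAt_timeDeriv (hf : Differentiable ℝ fun p : ℝ × E => f p.1 p.2) (t : ℝ) (x : E) :
    HasDerivAt (fun s => f s x) (timeDeriv f t x) t :=
  (hf.comp (differentiable_id.prodMk (differentiable_const x)) t).hasDerivAt

lemma timeDeriv_eq_fderiv (hf : Differentiable ℝ fun p : ℝ × E => f p.1 p.2) (t : ℝ) (x : E) :
    timeDeriv f t x = fderiv ℝ (fun p : ℝ × E => f p.1 p.2) (t, x) (1, 0) := by
  have h := (hf (t, x)).hasFDerivAt.comp_hasDerivAt t
    ((hasDerivAt_id t).prodMk (hasDerivAt_const t x))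
  exact h.deriv

lemma contDiff_timeDeriv (hf : ContDiff ℝ n fun p : ℝ × E => f p.1 p.2) (hmn : m + 1 ≤ n) :
    ContDiff ℝ m fun p : ℝ × E => timeDeriv f p.1 p.2 := by
  have hn : n ≠ 0 := (lt_of_lt_of_le (by simp) hmn).ne'
  simp only [timeDeriv_eq_fderiv (hf.differentiable hn)]
  exact (hf.fderiv_right hmn).clm_apply contDiff_const

lemma contDiff_fderiv_slice_apply (hf : ContDiff ℝ n fun p : ℝ × E => f p.1 p.2)
    (hmn : m + 1 ≤ n) (v : E) : ContDiff ℝ m fun p : ℝ × E => fderiv ℝ (f p.1) p.2 v :=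
  ContDiff.fderiv_apply (f := fun p : ℝ × E => f p.1)
    (hf.comp ((contDiff_fst.comp contDiff_fst).prodMk contDiff_snd)) contDiff_snd contDiff_const hmn

lemma hasDerivAt_fderiv_slice_apply (hf : ContDiff ℝ 2 fun p : ℝ × E => f p.1 p.2) (t : ℝ)
    (x v : E) :
    HasDerivAt (fun s => fderiv ℝ (f s) x v) (fderiv ℝ (timeDeriv f t) x v) t := by
  have hd : Differentiable ℝ fun p : ℝ × E => f p.1 p.2 := hf.differentiable two_ne_zero
  have hspace : Differentiable ℝ fun p : ℝ × E => fderiv ℝ (f p.1) p.2 v :=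
    (contDiff_fderiv_slice_apply hf one_add_one_eq_two.le v).differentiable one_ne_zero
  have htime : Differentiable ℝ fun p : ℝ × E => timeDeriv f p.1 p.2 :=
    (contDiff_timeDeriv hf one_add_one_eq_two.le).differentiable one_ne_zero
  have hcomm := VectorField.fderiv_apply_lieBracket (V := fun _ => ((0 : ℝ), v))
    (W := fun _ => ((1 : ℝ), (0 : E))) (hf.contDiffAt (x := (t, x))) (by simp)
    (by fun_prop) (by fun_prop)
  convert hasDerivAt_timeDeriv (f := fun s y => fderiv ℝ (f s) y v) hspace t x using 1
  rw [timeDeriv_eq_fderiv (f := fun t x => fderiv ℝ (f t) x v) hspace, fderiv_slice_apply htime]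
  simp only [fderiv_slice_apply hd, timeDeriv_eq_fderiv hd]
  have hzero : VectorField.lieBracket ℝ (fun _ => ((0 : ℝ), v)) (fun _ => ((1 : ℝ), (0 : E)))
      (t, x) = 0 := by simp [VectorField.lieBracket]
  rw [hzero, map_zero] at hcomm
  exact sub_eq_zero.1 hcomm.symm

lemma hasDerivAt_setIntegral_of_contDiff [MeasurableSpace E] [BorelSpace E] {μ : Measure E}
    [IsFiniteMeasureOnCompacts μ] {K : Set E} (hK : IsCompact K)
    (hf : ContDiff ℝ 1 fun p : ℝ × E => f p.1 p.2) (t : ℝ) :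
    HasDerivAt (fun s => ∫ x in K, f s x ∂μ) (∫ x in K, timeDeriv f t x ∂μ) t := by
  have hderiv : Continuous fun p : ℝ × E => timeDeriv f p.1 p.2 :=
    (contDiff_timeDeriv (m := 0) hf (by simp)).continuous
  have hslice (s : ℝ) : Continuous (f s) := (contDiff_slice hf s).continuous
  obtain ⟨C, hC⟩ := (isCompact_Icc.prod hK).exists_bound_of_continuousOn
    (hderiv.continuousOn (s := Set.Icc (t - 1) (t + 1) ×ˢ K))
  refine (hasDerivAt_integral_of_dominated_loc_of_deriv_le (F' := timeDeriv f) (bound := fun _ => C)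
    (Icc_mem_nhds (sub_one_lt t) (lt_add_one t)) ?_ ?_ ?_ ?_ ?_ ?_).2
  · exact .of_forall fun s =>
      (hslice s).continuousOn.aestronglyMeasurable_of_isCompact hK hK.measurableSet
  · exact (hslice t).continuousOn.integrableOn_compact hK
  · exact (hderiv.comp (.prodMk_right t)).continuousOn.aestronglyMeasurable_of_isCompact hK
      hK.measurableSet
  · filter_upwards [ae_restrict_mem hK.measurableSet] with x hx s hs using hC (s, x) ⟨hs, hx⟩
  · exact continuousOn_const.integrableOn_compact hK
  · exact .of_forall fun x s _ => hasDerivAt_timeDeriv (hf.differentiable one_ne_zero) s x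

end TimeDependent

section PressurePotential

/-- `H` is a pressure potential of the barotropic pressure law `p`: it is `C²` at positive
densities, where `p(r) = r H'(r) - H(r)`. -/
structure IsPressurePotential (p H : ℝ → ℝ) : Prop where
  contDiffOn : ContDiffOn ℝ 2 H (Set.Ioi 0)
  pressure_eq : ∀ r, 0 < r → p r = r * deriv H r - H r

lemma isPressurePotential_rpow {γ : ℝ} (hγ : γ ≠ 1) :
    IsPressurePotential (fun r => r ^ γ) (fun r => r ^ γ / (γ - 1)) where
  contDiffOn := (contDiffOn_id.rpow_const_of_ne fun _ hr => (ne_of_gt hr)).div_const _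
  pressure_eq r hr := by
    have hγ' : γ - 1 ≠ 0 := sub_ne_zero.2 hγ
    have hrpow : r ^ (γ - 1) * r = r ^ γ := by simpa using (Real.rpow_add_one hr.ne' (γ - 1)).symm
    have hderiv := ((Real.hasDerivAt_rpow_const (p := γ) (.inl hr.ne')).div_const (γ - 1)).deriv
    rw [hderiv]
    field_simp
    linear_combination -γ * hrpow

lemma IsPressurePotential.contDiff_deriv_comp {E : Type*} [NormedAddCommGroup E] [NormedSpace ℝ E]
    {p H : ℝ → ℝ} (hH : IsPressurePotential p H) {r : E → ℝ} (hr : ContDiff ℝ 1 r)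
    (hpos : ∀ y, 0 < r y) : ContDiff ℝ 1 fun y => deriv H (r y) :=
  (hH.contDiffOn.deriv_of_isOpen isOpen_Ioi one_add_one_eq_two.le).comp_contDiff hr hpos

lemma IsPressurePotential.grad_comp {p H : ℝ → ℝ} (hH : IsPressurePotential p H) {r : V3 → ℝ}
    (hr : Differentiable ℝ r) (hpos : ∀ y, 0 < r y) (x : V3) :
    grad (fun y => p (r y)) x = r x • grad (fun y => deriv H (r y)) x := by
  have hH0 : DifferentiableAt ℝ H (r x) :=
    (hH.contDiffOn.contDiffAt (Ioi_mem_nhds (hpos x))).differentiableAt two_ne_zero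
  have hH1 : DifferentiableAt ℝ (deriv H) (r x) :=
    ((hH.contDiffOn.deriv_of_isOpen isOpen_Ioi one_add_one_eq_two.le).contDiffAt
      (Ioi_mem_nhds (hpos x))).differentiableAt one_ne_zero
  have hp : (fun y => p (r y)) = fun y => r y * deriv H (r y) - H (r y) :=
    funext fun y => hH.pressure_eq _ (hpos y)
  ext i
  have hi : pd i (fun y => H (r y)) x = _ := pd_comp i hH0 (hr x)
  simp only [grad, hp, Pi.smul_apply, smul_eq_mul]
  rw [pd_sub i (by fun_prop) (by fun_prop), pd_mul i (by fun_prop) (by fun_prop), hi]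
  ring

end PressurePotential

section EnergyFlux

/-- The energy flux `2νρ Du u + 2κ² ∂ₜρ ∇ρ - (|u|²/2 + μ - 2κ²Δρ) ρu`, with density `r`,
velocity `w`, `μ = H'(ρ)` and `q = ∂ₜρ`; its divergence is a source of energy. -/
def energyFlux (ν κ : ℝ) (r μ q : V3 → ℝ) (w : V3 → V3) (x : V3) : V3 :=
  (2 * ν) • (fun j => ∑ i, w x i * (r x * symJ w x i j)) + (2 * κ ^ 2) • (q x • grad r x)
    - (1 / 2 * normSq (w x) + μ x - 2 * κ ^ 2 * lap r x) • (r x • w x)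

variable {ν κ : ℝ} {r μ q : V3 → ℝ} {w : V3 → V3} {x : V3}

lemma vdiv_energyFlux (ν κ : ℝ) (hr : DifferentiableAt ℝ r x) (hμ : DifferentiableAt ℝ μ x)
    (hq : DifferentiableAt ℝ q x) (hw : DifferentiableAt ℝ w x)
    (hgrad : DifferentiableAt ℝ (grad r) x) (hlap : DifferentiableAt ℝ (lap r) x)
    (hsym : DifferentiableAt ℝ (symJ w) x) :
    vdiv (energyFlux ν κ r μ q w) x
      = 2 * ν * (dot (w x) (mdiv (fun y i j => r y * symJ w y i j) x)
          + r x * ∑ i, ∑ j, symJ w x i j ^ 2)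
        + 2 * κ ^ 2 * (q x * lap r x + dot (grad r x) (grad q x))
        - ((1 / 2 * normSq (w x) + μ x - 2 * κ ^ 2 * lap r x) * vdiv (fun y => r y • w y) x
          + dot (r x • w x) (grad (fun y => 1 / 2 * normSq (w y)) x + grad μ x
            - (2 * κ ^ 2) • grad (lap r) x)) := by
  have hw' := differentiableAt_pi.1 hw
  have hsym' (i j : Fin 3) : DifferentiableAt ℝ (fun y => symJ w y i j) x :=
    differentiableAt_pi.1 (differentiableAt_pi.1 hsym i) j
  have hnorm : DifferentiableAt ℝ (fun y => normSq (w y)) x := by unfold normSq; fun_prop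
  have hstress : DifferentiableAt ℝ (fun y i j => r y * symJ w y i j) x := by fun_prop
  have hwork : DifferentiableAt ℝ (fun y j => ∑ i, w y i * (r y * symJ w y i j)) x := by fun_prop
  have hdiss : ∑ i, ∑ j, r x * symJ w x i j * jacb w x i j
      = r x * ∑ i, ∑ j, symJ w x i j ^ 2 := by
    simp only [← sum_symJ_mul_jacb, mul_assoc, Finset.mul_sum]
  have hhead : grad (fun y => 1 / 2 * normSq (w y) + μ y - 2 * κ ^ 2 * lap r y) x
      = grad (fun y => 1 / 2 * normSq (w y)) x + grad μ x - (2 * κ ^ 2) • grad (lap r) x := by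
    ext i
    simp (disch := fun_prop) only [grad, pd_add, pd_sub, pd_const_mul, Pi.add_apply, Pi.sub_apply,
      Pi.smul_apply, smul_eq_mul]
  unfold energyFlux
  rw [vdiv_sub (by fun_prop) (by fun_prop), vdiv_add (by fun_prop) (by fun_prop),
    vdiv_const_smul _ hwork, vdiv_const_smul _ (by fun_prop), vdiv_smul_grad hq hgrad,
    vdiv_smul (by fun_prop) (hr.fun_smul hw), vdiv_vecMul hw hstress, hhead, hdiss]

lemma contDiff_energyFlux {n : WithTop ℕ∞} (ν κ : ℝ) (hr : ContDiff ℝ (n + 2) r)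
    (hμ : ContDiff ℝ n μ) (hq : ContDiff ℝ n q) (hw : ContDiff ℝ (n + 1) w) :
    ContDiff ℝ n (energyFlux ν κ r μ q w) := by
  have hr0 : ContDiff ℝ n r := hr.of_le le_self_add
  have hw0 : ContDiff ℝ n w := hw.of_le le_self_add
  have hgrad : ContDiff ℝ n (grad r) :=
    contDiff_grad hr (add_le_add_right one_le_two n)
  have hlap : ContDiff ℝ n (lap r) := contDiff_lap hr le_rfl
  have hsym : ContDiff ℝ n (symJ w) := contDiff_symJ hw le_rfl
  have hnorm : ContDiff ℝ n fun y => normSq (w y) := contDiff_normSq hw0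
  unfold energyFlux
  fun_prop

protected lemma LatticePeriodic.energyFlux (ν κ : ℝ) (hr : LatticePeriodic r)
    (hμ : LatticePeriodic μ) (hq : LatticePeriodic q) (hw : LatticePeriodic w) :
    LatticePeriodic (energyFlux ν κ r μ q w) := by
  intro x k
  simp only [_root_.energyFlux, hr x k, hμ x k, hq x k, hw x k, hw.symJ x k, hr.grad x k,
    hr.lap x k]

lemma energy_balance {a : V3} (hr : DifferentiableAt ℝ r x) (hμ : DifferentiableAt ℝ μ x)
    (hq : DifferentiableAt ℝ q x) (hw : DifferentiableAt ℝ w x)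
    (hgrad : DifferentiableAt ℝ (grad r) x) (hlap : DifferentiableAt ℝ (lap r) x)
    (hsym : DifferentiableAt ℝ (symJ w) x) (hmass : q x + vdiv (fun y => r y • w y) x = 0)
    (hmom : a + mdiv (fun y i j => r y * w y i * w y j) x + r x • grad μ x
      - (2 * ν) • mdiv (fun y i j => r y * symJ w y i j) x
      - (2 * κ ^ 2) • (r x • grad (lap r) x) = 0) :
    dot (w x) a - 1 / 2 * q x * normSq (w x) + μ x * q x + 2 * κ ^ 2 * dot (grad r x) (grad q x)
      = -(2 * ν) * (r x * ∑ i, ∑ j, symJ w x i j ^ 2) + vdiv (energyFlux ν κ r μ q w) x := by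
  have hconv : dot (w x) (mdiv (fun y i j => r y * w y i * w y j) x)
      = normSq (w x) * vdiv (fun y => r y • w y) x
        + dot (r x • w x) (grad (fun y => 1 / 2 * normSq (w y)) x) := by
    rw [← dot_mdiv_outer hw (hr.fun_smul hw)]
    simp only [Pi.smul_apply, smul_eq_mul, mul_left_comm, mul_assoc]
  have hpower := congrArg (dot (w x)) hmom
  rw [vdiv_energyFlux ν κ hr hμ hq hw hgrad hlap hsym]
  simp only [dot_eq_dotProduct, dotProduct_add, dotProduct_sub, dotProduct_smul, smul_dotProduct,
    dotProduct_zero, smul_eq_mul] at hpower hconv ⊢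
  linear_combination hpower - hconv
    + (μ x - 2 * κ ^ 2 * lap r x - 1 / 2 * normSq (w x)) * hmass

end EnergyFlux

section EnergyDensity

/-- The energy density `ρ|u|²/2 + H(ρ) + κ²|∇ρ|²` of a density `r` and a velocity `w`. -/
def energyDensity (κ : ℝ) (H : ℝ → ℝ) (r : V3 → ℝ) (w : V3 → V3) (x : V3) : ℝ :=
  (1 / 2) * r x * normSq (w x) + H (r x) + κ ^ 2 * normSq (grad r x)

variable {ρ : ℝ → V3 → ℝ} {u : ℝ → V3 → V3} {H : ℝ → ℝ}

lemma contDiff_energyDensity {n : WithTop ℕ∞} (κ : ℝ)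
    (hρ : ContDiff ℝ (n + 1) fun p : ℝ × V3 => ρ p.1 p.2)
    (hu : ContDiff ℝ n fun p : ℝ × V3 => u p.1 p.2) (hpos : ∀ t x, 0 < ρ t x)
    (hH : ContDiffOn ℝ n H (Set.Ioi 0)) :
    ContDiff ℝ n fun p : ℝ × V3 => energyDensity κ H (ρ p.1) (u p.1) p.2 := by
  have hρn : ContDiff ℝ n fun p : ℝ × V3 => ρ p.1 p.2 := hρ.of_le le_self_add
  have hHρ : ContDiff ℝ n fun p : ℝ × V3 => H (ρ p.1 p.2) :=
    hH.comp_contDiff hρn fun p => hpos p.1 p.2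
  have hgrad : ContDiff ℝ n fun p : ℝ × V3 => grad (ρ p.1) p.2 :=
    contDiff_pi.2 fun _ => contDiff_fderiv_slice_apply hρ le_rfl _
  exact (((contDiff_const.mul hρn).mul (contDiff_normSq hu)).add hHρ).add
    (contDiff_const.mul (contDiff_normSq hgrad))

lemma hasDerivAt_energyDensity (κ : ℝ) (hρ : ContDiff ℝ 2 fun p : ℝ × V3 => ρ p.1 p.2)
    (hu : Differentiable ℝ fun p : ℝ × V3 => u p.1 p.2) {t : ℝ} {x : V3}
    (hH : DifferentiableAt ℝ H (ρ t x)) :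
    HasDerivAt (fun s => energyDensity κ H (ρ s) (u s) x)
      (dot (u t x) (fun i => deriv (fun s => ρ s x * u s x i) t)
        - 1 / 2 * timeDeriv ρ t x * normSq (u t x) + deriv H (ρ t x) * timeDeriv ρ t x
        + 2 * κ ^ 2 * dot (grad (ρ t) x) (grad (timeDeriv ρ t) x)) t := by
  have dρ : HasDerivAt (fun s => ρ s x) (timeDeriv ρ t x) t :=
    hasDerivAt_timeDeriv (hρ.differentiable two_ne_zero) t x
  have du : HasDerivAt (fun s => u s x) (timeDeriv u t x) t := hasDerivAt_timeDeriv hu t x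
  have dgrad : HasDerivAt (fun s => grad (ρ s) x) (grad (timeDeriv ρ t) x) t :=
    hasDerivAt_pi.2 fun _ => hasDerivAt_fderiv_slice_apply hρ t x _
  have dH : HasDerivAt (fun s => H (ρ s x)) _ t := hH.hasDerivAt.comp t dρ
  have dmom (i : Fin 3) : deriv (fun s => ρ s x * u s x i) t = _ :=
    (dρ.mul (hasDerivAt_pi.1 du i)).deriv
  refine (((dρ.const_mul (1 / 2)).mul (hasDerivAt_normSq du)).add dH).add
    ((hasDerivAt_normSq dgrad).const_mul (κ ^ 2)) |>.congr_deriv ?_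
  simp only [dmom, dot, normSq, Fin.sum_univ_three]
  ring

lemma timeDeriv_energyDensity {ν κ : ℝ} {p : ℝ → ℝ} {t : ℝ} {x : V3} (hH : IsPressurePotential p H)
    (hρ : ContDiff ℝ 3 fun z : ℝ × V3 => ρ z.1 z.2)
    (hu : ContDiff ℝ 2 fun z : ℝ × V3 => u z.1 z.2) (hpos : ∀ y, 0 < ρ t y)
    (hcont : timeDeriv ρ t x + vdiv (fun y => ρ t y • u t y) x = 0)
    (hmom : (fun i => deriv (fun s => ρ s x * u s x i) t)
        + mdiv (fun y i j => ρ t y * u t y i * u t y j) x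
        + grad (fun y => p (ρ t y)) x
        - (2 * ν) • mdiv (fun y i j => ρ t y * symJ (u t) y i j) x
        - (2 * κ ^ 2) • (ρ t x • grad (lap (ρ t)) x) = 0) :
    timeDeriv (fun s => energyDensity κ H (ρ s) (u s)) t x
      = -(2 * ν) * (ρ t x * ∑ i, ∑ j, symJ (u t) x i j ^ 2)
        + vdiv (energyFlux ν κ (ρ t) (fun y => deriv H (ρ t y)) (timeDeriv ρ t) (u t)) x := by
  have hr : ContDiff ℝ 3 (ρ t) := contDiff_slice hρ t
  have hw : ContDiff ℝ 2 (u t) := contDiff_slice hu t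
  have hq : ContDiff ℝ 2 (timeDeriv ρ t) :=
    contDiff_slice (contDiff_timeDeriv hρ two_add_one_eq_three.le) t
  have hμ : ContDiff ℝ 1 fun y => deriv H (ρ t y) :=
    hH.contDiff_deriv_comp (hr.of_le Nat.one_le_ofNat) hpos
  have hgrad : ContDiff ℝ 2 (grad (ρ t)) := contDiff_grad hr two_add_one_eq_three.le
  have hlap : ContDiff ℝ 1 (lap (ρ t)) := contDiff_lap hr (by norm_num)
  have hsym : ContDiff ℝ 1 (symJ (u t)) := contDiff_symJ hw one_add_one_eq_two.le
  have hHx : DifferentiableAt ℝ H (ρ t x) :=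
    (hH.contDiffOn.contDiffAt (Ioi_mem_nhds (hpos x))).differentiableAt two_ne_zero
  rw [hH.grad_comp (hr.differentiable three_ne_zero) hpos] at hmom
  have hderiv := (hasDerivAt_energyDensity κ (hρ.of_le (by norm_num))
    (hu.differentiable two_ne_zero) hHx).deriv
  exact hderiv.trans <|
    energy_balance (hr.differentiable three_ne_zero x) (hμ.differentiable one_ne_zero x)
      (hq.differentiable two_ne_zero x) (hw.differentiable two_ne_zero x)
      (hgrad.differentiable two_ne_zero x) (hlap.differentiable one_ne_zero x)
      (hsym.differentiable one_ne_zero x) hcont hmom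

end EnergyDensity

theorem energy_dissipation_general {ν κ : ℝ} {p H : ℝ → ℝ} (hH : IsPressurePotential p H)
    {ρ : ℝ → V3 → ℝ} {u : ℝ → V3 → V3} {t : ℝ} (hρ : ContDiff ℝ 3 fun z : ℝ × V3 => ρ z.1 z.2)
    (hu : ContDiff ℝ 2 fun z : ℝ × V3 => u z.1 z.2) (hρper : ∀ s, LatticePeriodic (ρ s))
    (huper : LatticePeriodic (u t)) (hpos : ∀ s x, 0 < ρ s x)
    (hcont : ∀ x, timeDeriv ρ t x + vdiv (fun y => ρ t y • u t y) x = 0)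
    (hmom : ∀ x,
      (fun i => deriv (fun s => ρ s x * u s x i) t)
        + mdiv (fun y i j => ρ t y * u t y i * u t y j) x
        + grad (fun y => p (ρ t y)) x
        - (2 * ν) • mdiv (fun y i j => ρ t y * symJ (u t) y i j) x
        - (2 * κ ^ 2) • (ρ t x • grad (lap (ρ t)) x)
      = 0) :
    HasDerivAt (fun s => ∫ x in Set.Icc (0 : V3) 1, energyDensity κ H (ρ s) (u s) x)
      (-(2 * ν) * ∫ x in Set.Icc (0 : V3) 1, ρ t x * ∑ i, ∑ j, (symJ (u t) x i j) ^ 2) t := by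
  let F := energyFlux ν κ (ρ t) (fun y => deriv H (ρ t y)) (timeDeriv ρ t) (u t)
  have hF : ContDiff ℝ 1 F :=
    contDiff_energyFlux ν κ ((contDiff_slice hρ t).of_le (by norm_num))
      (hH.contDiff_deriv_comp ((contDiff_slice hρ t).of_le Nat.one_le_ofNat) (hpos t))
      (contDiff_slice (contDiff_timeDeriv hρ (by norm_num)) t)
      ((contDiff_slice hu t).of_le one_add_one_eq_two.le)
  have hFper : LatticePeriodic F :=
    .energyFlux ν κ (hρper t) (fun x k => congrArg (deriv H) (hρper t x k)) (.timeDeriv hρper t)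
      huper
  have hdiss : Continuous fun x => ρ t x * ∑ i, ∑ j, symJ (u t) x i j ^ 2 := by
    have hr : Continuous (ρ t) := (contDiff_slice hρ t).continuous
    have hsym : Continuous (symJ (u t)) :=
      (contDiff_symJ (m := 0) (contDiff_slice hu t) (by simp)).continuous
    fun_prop
  have hE := hasDerivAt_setIntegral_of_contDiff (f := fun s => energyDensity κ H (ρ s) (u s))
    (μ := volume) (isCompact_Icc (a := (0 : V3)) (b := 1))
    (contDiff_energyDensity κ (hρ.of_le (by norm_num)) (hu.of_le one_le_two) hpos
      (hH.contDiffOn.of_le one_le_two)) t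
  refine hE.congr_deriv ?_
  simp_rw [timeDeriv_energyDensity hH hρ hu (hpos t) (hcont _) (hmom _)]
  rw [integral_add (hdiss.const_mul _).integrableOn_Icc (continuous_vdiv hF).integrableOn_Icc,
    integral_vdiv_eq_zero hF hFper, add_zero, integral_const_mul]

/-- energy dissipation identity
`E'(t) = −2ν ∫ ρ |Du|²` for smooth periodic solutions of the
Navier–Stokes–Korteweg system. -/
theorem energy_dissipation
    (ν κ γ T : ℝ) (hν : 0 < ν) (hκ : 0 < κ) (hγ : 1 < γ) (hT : 0 < T)
    (ρ : ℝ → V3 → ℝ) (u : ℝ → V3 → V3)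
    (hρ : ContDiff ℝ (⊤ : ℕ∞) (fun p : ℝ × V3 => ρ p.1 p.2))
    (hu : ContDiff ℝ (⊤ : ℕ∞) (fun p : ℝ × V3 => u p.1 p.2))
    (hρper : ∀ t x (k : Fin 3 → ℤ), ρ t (x + fun i => (k i : ℝ)) = ρ t x)
    (huper : ∀ t x (k : Fin 3 → ℤ), u t (x + fun i => (k i : ℝ)) = u t x)
    (hpos : ∀ t x, 0 < ρ t x)
    (hcont : ∀ t ∈ Set.Icc (0 : ℝ) T, ∀ x,
      deriv (fun s => ρ s x) t + vdiv (fun y => ρ t y • u t y) x = 0)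
    (hmom : ∀ t ∈ Set.Icc (0 : ℝ) T, ∀ x,
      (fun i => deriv (fun s => ρ s x * u s x i) t)
        + mdiv (fun y i j => ρ t y * u t y i * u t y j) x
        + grad (fun y => ρ t y ^ γ) x
        - (2 * ν) • mdiv (fun y i j => ρ t y * symJ (u t) y i j) x
        - (2 * κ ^ 2) • (ρ t x • grad (fun y => lap (ρ t) y) x)
      = 0) :
    ∀ t ∈ Set.Ioo (0 : ℝ) T,
      HasDerivAt
        (fun s => ∫ x in Set.Icc (0 : V3) 1,
          ((1 / 2) * ρ s x * normSq (u s x)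
            + (ρ s x) ^ γ / (γ - 1)
            + κ ^ 2 * normSq (grad (ρ s) x)))
        (-(2 * ν) * ∫ x in Set.Icc (0 : V3) 1,
            ρ t x * ∑ i, ∑ j, (symJ (u t) x i j) ^ 2) t :=
  fun t ht => energy_dissipation_general (isPressurePotential_rpow hγ.ne')
    (contDiff_infty.1 hρ 3) (contDiff_infty.1 hu 2) hρper (huper t) hpos
    (hcont t (Set.Ioo_subset_Icc_self ht)) (hmom t (Set.Ioo_subset_Icc_self ht))
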